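/- There exists a holomorphic function g_+ on D = ℂ ∖ 𝒞(a,b) such that (g_+(z))² = f_{a,b}(z) for all z ∈ D, g_+(z) → 1 as |z| → ∞, and the square-root branches g^N_+ of the partial products converge to g_+ uniformly on every compact subset of D as N → ∞. -/

import Mathlib

open Filter Topology

/-- The Cantor-type set 𝒞(a,b) = [a₀,b₀] ∖ ⋃_{i≥1} (aᵢ,bᵢ), viewed as a subset of ℂ. -/
noncomputable def cantorAB (a b : ℕ → ℝ) : Set ℂ :=
  (fun x : ℝ => (x : ℂ)) '' (Set.Icc (a 0) (b 0) \ ⋃ i : ℕ, Set.Ioo (a (i + 1)) (b (i + 1)))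

/-- The partial product f^N(z) = ((z−b₀)/(z−a₀)) ∏_{i=1}^N (z−aᵢ)/(z−bᵢ). -/
noncomputable def partialProd (a b : ℕ → ℝ) (N : ℕ) (z : ℂ) : ℂ :=
  ((z - (b 0 : ℂ)) / (z - (a 0 : ℂ))) *
    ∏ i ∈ Finset.Icc 1 N, ((z - (a i : ℂ)) / (z - (b i : ℂ)))

/-- D_N = ℂ ∖ ([a₀,b₀] ∖ ⋃_{j=1}^N (a_j,b_j)). -/
noncomputable def domDN (a b : ℕ → ℝ) (N : ℕ) : Set ℂ :=
  ((fun x : ℝ => (x : ℂ)) ''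
    (Set.Icc (a 0) (b 0) \ ⋃ j ∈ Set.Icc 1 N, Set.Ioo (a j) (b j)))ᶜ

/-!
For `N ≥ M` the functions `g^N₊` and `g^M₊ · ∏_{M < i ≤ N} √((z - a i) / (z - b i))`, with principal
square roots, have the same square on the connected set `D_M` and the same limit `1` at infinity, so
they agree there. The lengths `b i - a i` of the disjoint gaps are summable, hence the product over
all `i > M` converges locally uniformly on `D_M` and still tends to `1` at infinity. Since the `D_M`
exhaust `D`, the limits of `g^N₊` on the sets `D_M` glue to the required function.
-/

section LocallyUniformLimits

variable {α β ι : Type*} [TopologicalSpace α] [UniformSpace β] {s : Set α} {f : α → β}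

theorem tendstoLocallyUniformlyOn_const (l : Filter ι) :
    TendstoLocallyUniformlyOn (fun _ => f) f l s := fun _ hu _ _ =>
  ⟨s, self_mem_nhdsWithin, Eventually.of_forall fun _ _ _ => refl_mem_uniformity hu⟩

theorem tendstoLocallyUniformlyOn_of_add_left {F : ℕ → α → β} {k : ℕ}
    (h : TendstoLocallyUniformlyOn (fun n => F (k + n)) f atTop s) :
    TendstoLocallyUniformlyOn F f atTop s := by
  intro u hu x hx
  obtain ⟨t, ht, hev⟩ := h u hu x hx
  refine ⟨t, ht, ?_⟩
  filter_upwards [(tendsto_sub_atTop_nat k).eventually hev, eventually_ge_atTop k] with n hn hk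
  rwa [Nat.add_sub_of_le hk] at hn

end LocallyUniformLimits

section ComplexSqrt

theorem sq_complexSqrt (w : ℂ) : w.sqrt ^ 2 = w :=
  Complex.cpow_nat_inv_pow w two_ne_zero

theorem complexSqrt_re_nonneg (w : ℂ) : 0 ≤ w.sqrt.re := by
  rw [Complex.sqrt, Complex.cpow_inv_two_re]
  exact Real.sqrt_nonneg _

theorem norm_complexSqrt_sub_one_le (w : ℂ) : ‖w.sqrt - 1‖ ≤ ‖w - 1‖ := by
  have one_le_norm : 1 ≤ ‖w.sqrt + 1‖ :=
    calc 1 ≤ (w.sqrt + 1).re := by simpa using complexSqrt_re_nonneg w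
      _ ≤ ‖w.sqrt + 1‖ := Complex.re_le_norm _
  calc ‖w.sqrt - 1‖ ≤ ‖w.sqrt - 1‖ * ‖w.sqrt + 1‖ :=
        le_mul_of_one_le_right (norm_nonneg _) one_le_norm
    _ = ‖w.sqrt ^ 2 - 1‖ := by rw [← norm_mul]; ring_nf
    _ = ‖w - 1‖ := by rw [sq_complexSqrt]

end ComplexSqrt

/-- `g` is the holomorphic square root of `F` on the neighbourhood `U` of infinity that is
normalised by `g → 1` at infinity. -/
structure IsSqrtBranch (U : Set ℂ) (F g : ℂ → ℂ) : Prop where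
  differentiableOn : DifferentiableOn ℂ g U
  sq_eq : ∀ z ∈ U, g z ^ 2 = F z
  tendsto : Tendsto g (Bornology.cobounded ℂ) (𝓝 1)

namespace IsSqrtBranch

variable {U : Set ℂ} {F G g h : ℂ → ℂ}

theorem mul (hg : IsSqrtBranch U F g) (hh : IsSqrtBranch U G h) :
    IsSqrtBranch U (fun z => F z * G z) fun z => g z * h z where
  differentiableOn := hg.differentiableOn.mul hh.differentiableOn
  sq_eq z hz := by rw [mul_pow, hg.sq_eq z hz, hh.sq_eq z hz]
  tendsto := by simpa only [mul_one] using hg.tendsto.mul hh.tendsto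

theorem mono {V : Set ℂ} (hg : IsSqrtBranch U F g) (hVU : V ⊆ U) : IsSqrtBranch V F g where
  differentiableOn := hg.differentiableOn.mono hVU
  sq_eq z hz := hg.sq_eq z (hVU hz)
  tendsto := hg.tendsto

theorem eqOn (hU : IsPreconnected U) (hU_inf : U ∈ Bornology.cobounded ℂ)
    (hF : ∀ z ∈ U, F z ≠ 0) (hg : IsSqrtBranch U F g) (hh : IsSqrtBranch U F h) :
    Set.EqOn g h U := by
  have hsq : Set.EqOn (g ^ 2) (h ^ 2) U := fun z hz => (hg.sq_eq z hz).trans (hh.sq_eq z hz).symm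
  have hne : ∀ {z}, z ∈ U → h z ≠ 0 := fun {z} hz hzero =>
    hF z hz (by rw [← hh.sq_eq z hz, hzero, zero_pow two_ne_zero])
  refine (hU.eq_or_eq_neg_of_sq_eq hg.differentiableOn.continuousOn
    hh.differentiableOn.continuousOn hsq hne).resolve_right fun hneg => ?_
  have hlim : Tendsto g (Bornology.cobounded ℂ) (𝓝 (-1)) :=
    hh.tendsto.neg.congr' (hneg.symm.eventuallyEq_of_mem hU_inf)
  exact absurd (tendsto_nhds_unique hg.tendsto hlim) (by norm_num)

theorem iUnion_of_tendstoLocallyUniformlyOn {U : ℕ → Set ℂ} {F g : ℕ → ℂ → ℂ} {f G : ℂ → ℂ}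
    (hU : ∀ n, IsOpen (U n)) (hU_mono : Monotone U)
    (hg : ∀ᶠ n in atTop, IsSqrtBranch (U n) (F n) (g n))
    (hF : ∀ z ∈ ⋃ n, U n, Tendsto (fun n => F n z) atTop (𝓝 (f z)))
    (hlim : TendstoLocallyUniformlyOn g G atTop (⋃ n, U n))
    (hG : Tendsto G (Bornology.cobounded ℂ) (𝓝 1)) :
    IsSqrtBranch (⋃ n, U n) f G where
  differentiableOn := by
    refine (differentiableOn_iUnion_iff_of_isOpen hU).2 fun M => ?_
    refine (hlim.mono (Set.subset_iUnion U M)).differentiableOn ?_ (hU M)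
    filter_upwards [hg, eventually_ge_atTop M] with n hn hMn
    exact hn.differentiableOn.mono (hU_mono hMn)
  sq_eq z hz := by
    obtain ⟨M, hzM⟩ := Set.mem_iUnion.1 hz
    refine tendsto_nhds_unique (((hlim.tendsto_at hz).pow 2).congr' ?_) (hF z hz)
    filter_upwards [hg, eventually_ge_atTop M] with n hn hMn
    exact hn.sq_eq z (hU_mono hMn hzM)
  tendsto := hG

end IsSqrtBranch

theorem div_sub_mem_slitPlane {c d z : ℂ} (hz : z ∉ segment ℝ c d) :
    (z - c) / (z - d) ∈ Complex.slitPlane := by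
  rw [Complex.mem_slitPlane_iff_not_le_zero]
  intro hle
  have hzd : z - d ≠ 0 := sub_ne_zero.2 fun h => hz (h ▸ right_mem_segment ℝ c d)
  obtain ⟨t, ht, hquot⟩ : ∃ t : ℝ, 0 ≤ t ∧ (z - c) / (z - d) = -t := by
    obtain ⟨hre, him⟩ := Complex.le_def.1 hle
    exact ⟨-((z - c) / (z - d)).re, neg_nonneg.2 hre, Complex.ext (by simp) (by simpa using him)⟩
  have hpos : 0 < 1 + t := by positivity
  have hne : (1 + t : ℂ) ≠ 0 := mod_cast hpos.ne'
  rw [div_eq_iff hzd] at hquot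
  refine hz ⟨1 / (1 + t), t / (1 + t), by positivity, by positivity, by field_simp, ?_⟩
  simp only [Complex.real_smul]
  push_cast
  field_simp
  linear_combination -hquot

/-- The principal branch of `√((z - c) / (z - d))`, holomorphic off the segment `[c, d]`. -/
noncomputable def sqrtRatio (c d z : ℂ) : ℂ :=
  ((z - c) / (z - d)).sqrt

theorem differentiableAt_sqrtRatio {c d z : ℂ} (hz : z ∉ segment ℝ c d) :
    DifferentiableAt ℂ (sqrtRatio c d) z := by
  have hzd : z - d ≠ 0 := sub_ne_zero.2 fun h => hz (h ▸ right_mem_segment ℝ c d)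
  have hquot : DifferentiableAt ℂ (fun w : ℂ => (w - c) / (w - d)) z := by
    fun_prop (disch := exact hzd)
  exact hquot.cpow_const (div_sub_mem_slitPlane hz)

theorem norm_sqrtRatio_sub_one_le (c : ℂ) {d z : ℂ} (hz : z ≠ d) :
    ‖sqrtRatio c d z - 1‖ ≤ ‖d - c‖ / ‖z - d‖ := by
  refine (norm_complexSqrt_sub_one_le _).trans_eq ?_
  rw [div_sub_one (sub_ne_zero.2 hz), norm_div, sub_sub_sub_cancel_left]

theorem tendsto_sqrtRatio_cobounded (c d : ℂ) :
    Tendsto (sqrtRatio c d) (Bornology.cobounded ℂ) (𝓝 1) := by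
  rw [tendsto_iff_norm_sub_tendsto_zero]
  have hdist : Tendsto (fun z => ‖z - d‖) (Bornology.cobounded ℂ) atTop := by
    simpa only [dist_eq_norm] using Metric.tendsto_dist_right_cobounded_atTop d
  refine squeeze_zero' (Eventually.of_forall fun z => norm_nonneg _) ?_
    (hdist.const_div_atTop ‖d - c‖)
  filter_upwards [Bornology.eventually_ne_cobounded d] with z hz
  exact norm_sqrtRatio_sub_one_le c hz

theorem isSqrtBranch_sqrtRatio {U : Set ℂ} {c d : ℂ} (hU : Disjoint U (segment ℝ c d)) :
    IsSqrtBranch U (fun z => (z - c) / (z - d)) (sqrtRatio c d) where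
  differentiableOn _ hz :=
    (differentiableAt_sqrtRatio (Set.disjoint_left.1 hU hz)).differentiableWithinAt
  sq_eq _ _ := sq_complexSqrt _
  tendsto := tendsto_sqrtRatio_cobounded c d

section InfiniteProduct

variable {ι : Type*} {c d : ι → ℂ}

theorem hasProdLocallyUniformlyOn_sqrtRatio (hsum : Summable fun i => ‖d i - c i‖)
    {U : Set ℂ} (hU : IsOpen U) (hseg : ∀ i, Disjoint U (segment ℝ (c i) (d i))) :
    HasProdLocallyUniformlyOn (fun i => sqrtRatio (c i) (d i))
      (fun z => ∏' i, sqrtRatio (c i) (d i) z) U := by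
  refine hasProdLocallyUniformlyOn_of_forall_compact hU fun K hKU hK => ?_
  obtain ⟨δ, hδ, hdist⟩ : ∃ δ > 0, ∀ i, ∀ z ∈ K, δ ≤ ‖z - d i‖ := by
    obtain ⟨δ, hδ, hthick⟩ := hK.exists_thickening_subset_open hU hKU
    refine ⟨δ, hδ, fun i z hz => not_lt.1 fun hlt => ?_⟩
    refine Set.disjoint_left.1 (hseg i) (hthick ?_) (right_mem_segment ℝ (c i) (d i))
    exact Metric.mem_thickening_iff.2 ⟨z, hz, by rwa [dist_comm, dist_eq_norm]⟩
  have hbound : ∀ i, ∀ z ∈ K, ‖sqrtRatio (c i) (d i) z - 1‖ ≤ ‖d i - c i‖ / δ := by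
    intro i z hz
    have hz_ne : z ≠ d i := sub_ne_zero.1 (norm_pos_iff.1 (hδ.trans_le (hdist i z hz)))
    refine (norm_sqrtRatio_sub_one_le _ hz_ne).trans ?_
    gcongr
    exact hdist i z hz
  have hcont : ∀ i, ContinuousOn (fun z => sqrtRatio (c i) (d i) z - 1) K := fun i =>
    ((isSqrtBranch_sqrtRatio (hseg i)).differentiableOn.continuousOn.mono hKU).sub
      continuousOn_const
  simpa only [add_sub_cancel] using Summable.hasProdUniformlyOn_one_add hK (hsum.div_const δ)
    (Eventually.of_forall hbound) hcont

theorem tendsto_tprod_sqrtRatio_cobounded (hsum : Summable fun i => ‖d i - c i‖)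
    (hd : Bornology.IsBounded (Set.range d)) :
    Tendsto (fun z => ∏' i, sqrtRatio (c i) (d i) z) (Bornology.cobounded ℂ) (𝓝 1) := by
  obtain ⟨R, hR⟩ := hd.exists_norm_le
  have hbound : ∀ᶠ z in Bornology.cobounded ℂ, ∀ i,
      ‖sqrtRatio (c i) (d i) z - 1‖ ≤ ‖d i - c i‖ := by
    filter_upwards [tendsto_norm_cobounded_atTop.eventually_ge_atTop (R + 1)] with z hz i
    have hdist : 1 ≤ ‖z - d i‖ := by
      linarith [norm_sub_norm_le z (d i), hR (d i) (Set.mem_range_self i)]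
    have hz_ne : z ≠ d i := sub_ne_zero.1 (norm_pos_iff.1 (one_pos.trans_le hdist))
    exact (norm_sqrtRatio_sub_one_le _ hz_ne).trans (div_le_self (norm_nonneg _) hdist)
  simpa using tendsto_tprod_one_add_of_dominated_convergence (g := 0) hsum
    (fun i => by simpa using (tendsto_sqrtRatio_cobounded (c i) (d i)).sub_const 1) hbound

end InfiniteProduct

theorem summable_sub_of_pairwise_disjoint_Ioo {ι : Type*} {a b : ι → ℝ} {s : Set ℝ}
    (hs : Bornology.IsBounded s) (hab : ∀ i, a i ≤ b i) (hsub : ∀ i, Set.Ioo (a i) (b i) ⊆ s)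
    (hdisj : Pairwise (Function.onFun Disjoint fun i => Set.Ioo (a i) (b i))) :
    Summable fun i => b i - a i := by
  have hfin : ∑' i, MeasureTheory.volume (Set.Ioo (a i) (b i)) ≠ ⊤ := by
    refine ne_top_of_le_ne_top ?_ (MeasureTheory.tsum_meas_le_meas_iUnion_of_disjoint
      MeasureTheory.volume (fun i => measurableSet_Ioo) hdisj)
    exact (hs.subset (Set.iUnion_subset hsub)).measure_lt_top.ne
  refine (ENNReal.summable_toReal hfin).congr fun i => ?_
  rw [Real.volume_Ioo, ENNReal.toReal_ofReal (sub_nonneg.2 (hab i))]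

theorem isPreconnected_compl_ofReal_image {s : Set ℝ} (hs : sᶜ.Nonempty) :
    IsPreconnected ((fun x : ℝ => (x : ℂ)) '' s)ᶜ := by
  set t : Set ℂ := (fun x : ℝ => (x : ℂ)) '' s with ht
  have im_eq_zero : ∀ z ∈ t, z.im = 0 := by
    rintro _ ⟨x, -, rfl⟩
    exact Complex.ofReal_im x
  -- A closed half-plane minus `t` lies between the open half-plane and its closure.
  have hupper : IsPreconnected ({z : ℂ | 0 ≤ z.im} \ t) :=
    (convex_halfSpace_im_gt 0).isPreconnected.subset_closure
      (fun z (hz : 0 < z.im) => ⟨hz.le, fun hzt => hz.ne' (im_eq_zero z hzt)⟩)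
      (by rw [Complex.closure_setOfPred_lt_im]; exact Set.sdiff_subset)
  have hlower : IsPreconnected ({z : ℂ | z.im ≤ 0} \ t) :=
    (convex_halfSpace_im_lt 0).isPreconnected.subset_closure
      (fun z (hz : z.im < 0) => ⟨hz.le, fun hzt => hz.ne (im_eq_zero z hzt)⟩)
      (by rw [Complex.closure_setOfPred_im_lt]; exact Set.sdiff_subset)
  obtain ⟨x, hx⟩ := hs
  have hxt : (x : ℂ) ∉ t := by simpa [ht] using hx
  have hunion := hupper.union (x : ℂ) (by simpa using hxt) (by simpa using hxt) hlower
  convert hunion using 1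
  ext z
  simp [← or_and_right, le_total]

section Domains

variable (a b : ℕ → ℝ)

theorem isCompact_compl_domDN (N : ℕ) : IsCompact (domDN a b N)ᶜ := by
  rw [domDN, compl_compl]
  exact (isCompact_Icc.diff (isOpen_biUnion fun _ _ => isOpen_Ioo)).image
    Complex.continuous_ofReal

theorem isOpen_domDN (N : ℕ) : IsOpen (domDN a b N) :=
  isClosed_compl_iff.1 (isCompact_compl_domDN a b N).isClosed

theorem domDN_mem_cobounded (N : ℕ) : domDN a b N ∈ Bornology.cobounded ℂ :=
  Bornology.isCobounded_def.1 <|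
    Bornology.isBounded_compl_iff.1 (isCompact_compl_domDN a b N).isBounded

theorem isPreconnected_domDN (N : ℕ) : IsPreconnected (domDN a b N) :=
  isPreconnected_compl_ofReal_image ⟨a 0 - 1, fun h => by linarith [h.1.1]⟩

theorem domDN_mono : Monotone (domDN a b) := fun _ _ hMN =>
  Set.compl_subset_compl.2 <| Set.image_mono <| Set.sdiff_subset_sdiff_right <|
    Set.biUnion_subset_biUnion_left (Set.Icc_subset_Icc_right hMN)

theorem iUnion_domDN : ⋃ N, domDN a b N = (cantorAB a b)ᶜ := by
  simp only [domDN, cantorAB, ← Set.compl_iInter]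
  rw [← Set.InjOn.image_iInter_eq Complex.ofReal_injective.injOn, ← Set.sdiff_iUnion]
  congr 3
  ext x
  simp only [Set.mem_iUnion, Set.mem_Icc, exists_prop]
  constructor
  · rintro ⟨N, j, ⟨hj, -⟩, hx⟩
    exact ⟨j - 1, by rwa [Nat.sub_add_cancel hj]⟩
  · rintro ⟨i, hx⟩
    exact ⟨i + 1, i + 1, ⟨Nat.le_add_left 1 i, le_rfl⟩, hx⟩

theorem isOpen_compl_cantorAB : IsOpen (cantorAB a b)ᶜ :=
  iUnion_domDN a b ▸ isOpen_iUnion (isOpen_domDN a b)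

variable {a b}

theorem ofReal_mem_domDN_iff {N : ℕ} {x : ℝ} :
    (x : ℂ) ∈ domDN a b N ↔
      (x ∈ Set.Icc (a 0) (b 0) → ∃ j, 1 ≤ j ∧ j ≤ N ∧ x ∈ Set.Ioo (a j) (b j)) := by
  rw [domDN, Set.mem_compl_iff, Complex.ofReal_injective.mem_set_image, Set.mem_sdiff, not_and,
    not_not]
  simp only [Set.mem_iUnion, Set.mem_Icc, exists_prop, and_assoc]

theorem disjoint_domDN_segment_of_disjoint_Ioo {N : ℕ} {c d : ℝ} (hcd : c ≤ d)
    (hsub : Set.Icc c d ⊆ Set.Icc (a 0) (b 0))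
    (hdisj : ∀ j, 1 ≤ j → j ≤ N → Disjoint (Set.Icc c d) (Set.Ioo (a j) (b j))) :
    Disjoint (domDN a b N) (segment ℝ (c : ℂ) d) := by
  have hseg : segment ℝ (c : ℂ) d = (fun x : ℝ => (x : ℂ)) '' Set.Icc c d := by
    rw [← segment_eq_Icc hcd]
    exact (image_segment ℝ Complex.ofRealCLM.toLinearMap.toAffineMap c d).symm
  rw [hseg, Set.disjoint_right]
  rintro _ ⟨x, hx, rfl⟩ hmem
  obtain ⟨j, hj, hjN, hxj⟩ := ofReal_mem_domDN_iff.1 hmem (hsub hx)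
  exact Set.disjoint_left.1 (hdisj j hj hjN) hx hxj

theorem partialProd_succ (N : ℕ) (z : ℂ) :
    partialProd a b (N + 1) z =
      partialProd a b N z * ((z - (a (N + 1) : ℂ)) / (z - (b (N + 1) : ℂ))) := by
  rw [partialProd, partialProd, Finset.prod_Icc_succ_top (Nat.le_add_left 1 N), mul_assoc]

end Domains

/-- The intervals `[a i, b i]`, `i ≥ 1`, lie in `[a 0, b 0]` and none of them meets the interior of
another one; common endpoints are allowed. -/
structure IsGapFamily (a b : ℕ → ℝ) : Prop where
  le : ∀ i, a i ≤ b i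
  Icc_subset : ∀ i, 1 ≤ i → Set.Icc (a i) (b i) ⊆ Set.Icc (a 0) (b 0)
  disjoint : ∀ i k, 1 ≤ i → 1 ≤ k → i ≠ k →
    Disjoint (Set.Icc (a i) (b i)) (Set.Ioo (a k) (b k))

/-- The factor `∏_{i > M} √((z - a i) / (z - b i))` by which the limit of the branches `g^N₊`
differs from `g^M₊`. -/
noncomputable def tailProd (a b : ℕ → ℝ) (M : ℕ) (z : ℂ) : ℂ :=
  ∏' i, sqrtRatio (a (M + i + 1)) (b (M + i + 1)) z

namespace IsGapFamily

variable {a b : ℕ → ℝ} {g : ℕ → ℂ → ℂ} {M : ℕ}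

theorem ofReal_notMem_domDN (h : IsGapFamily a b) {i : ℕ} {x : ℝ}
    (hx : x ∈ Set.Icc (a i) (b i)) (hx_int : x ∉ Set.Ioo (a i) (b i)) (N : ℕ) :
    (x : ℂ) ∉ domDN a b N := by
  intro hmem
  rw [ofReal_mem_domDN_iff] at hmem
  rcases Nat.eq_zero_or_pos i with rfl | hi
  · obtain ⟨j, hj, -, hxj⟩ := hmem hx
    obtain ⟨hleft, hright⟩ := (Set.Icc_subset_Icc_iff (h.le j)).1 (h.Icc_subset j hj)
    exact hx_int (Set.Ioo_subset_Ioo hleft hright hxj)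
  · obtain ⟨j, hj, -, hxj⟩ := hmem (h.Icc_subset i hi hx)
    obtain rfl | hne := eq_or_ne i j
    · exact hx_int hxj
    · exact Set.disjoint_left.1 (h.disjoint i j hi hj hne) hx hxj

theorem partialProd_ne_zero (h : IsGapFamily a b) (n : ℕ) {N : ℕ} {z : ℂ}
    (hz : z ∈ domDN a b N) : partialProd a b n z ≠ 0 := by
  have sub_left_ne : ∀ i, z - a i ≠ 0 := fun i => sub_ne_zero.2 fun hza =>
    h.ofReal_notMem_domDN (Set.left_mem_Icc.2 (h.le i)) Set.left_notMem_Ioo N (hza ▸ hz)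
  have sub_right_ne : ∀ i, z - b i ≠ 0 := fun i => sub_ne_zero.2 fun hzb =>
    h.ofReal_notMem_domDN (Set.right_mem_Icc.2 (h.le i)) Set.right_notMem_Ioo N (hzb ▸ hz)
  exact mul_ne_zero (div_ne_zero (sub_right_ne 0) (sub_left_ne 0)) <|
    Finset.prod_ne_zero_iff.2 fun i _ => div_ne_zero (sub_left_ne i) (sub_right_ne i)

theorem disjoint_domDN_segment (h : IsGapFamily a b) {i : ℕ} (hi : M < i) :
    Disjoint (domDN a b M) (segment ℝ (a i : ℂ) (b i)) :=
  disjoint_domDN_segment_of_disjoint_Ioo (h.le i) (h.Icc_subset i (by lia)) fun j hj hjM =>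
    h.disjoint i j (by lia) hj (by lia)

theorem summable_norm_sub (h : IsGapFamily a b) (M : ℕ) :
    Summable fun i => ‖(b (M + i + 1) - a (M + i + 1) : ℂ)‖ := by
  have hsum : Summable fun i => b (M + i + 1) - a (M + i + 1) :=
    summable_sub_of_pairwise_disjoint_Ioo (Metric.isBounded_Icc (a 0) (b 0)) (fun i => h.le _)
      (fun i => Set.Ioo_subset_Icc_self.trans (h.Icc_subset _ (by lia)))
      fun i k hik => (h.disjoint _ _ (by lia) (by lia) (by lia)).mono_left Set.Ioo_subset_Icc_self
  refine hsum.congr fun i => ?_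
  rw [← Complex.ofReal_sub, Complex.norm_of_nonneg (sub_nonneg.2 (h.le _))]

theorem hasProdLocallyUniformlyOn_tailProd (h : IsGapFamily a b) (M : ℕ) :
    HasProdLocallyUniformlyOn (fun i => sqrtRatio (a (M + i + 1)) (b (M + i + 1)))
      (tailProd a b M) (domDN a b M) :=
  hasProdLocallyUniformlyOn_sqrtRatio (h.summable_norm_sub M) (isOpen_domDN a b M)
    fun _ => h.disjoint_domDN_segment (by lia)

theorem tendsto_tailProd (h : IsGapFamily a b) (M : ℕ) :
    Tendsto (tailProd a b M) (Bornology.cobounded ℂ) (𝓝 1) := by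
  refine tendsto_tprod_sqrtRatio_cobounded (h.summable_norm_sub M) ?_
  refine ((isCompact_Icc (a := a 0) (b := b 0)).image Complex.continuous_ofReal).isBounded.subset ?_
  rintro _ ⟨i, rfl⟩
  exact Set.mem_image_of_mem _ (h.Icc_subset _ (by lia) (Set.right_mem_Icc.2 (h.le _)))

theorem isSqrtBranch_mul_prod (h : IsGapFamily a b) {u : ℂ → ℂ}
    (hu : IsSqrtBranch (domDN a b M) (partialProd a b M) u) (n : ℕ) :
    IsSqrtBranch (domDN a b M) (partialProd a b (M + n))
      fun z => u z * ∏ i ∈ Finset.range n, sqrtRatio (a (M + i + 1)) (b (M + i + 1)) z := by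
  induction n with
  | zero => simpa using hu
  | succ n ih =>
    have hfactor := isSqrtBranch_sqrtRatio (h.disjoint_domDN_segment (by lia : M < M + n + 1))
    simpa only [Finset.prod_range_succ, ← mul_assoc, ← add_assoc, ← partialProd_succ]
      using ih.mul hfactor

theorem eqOn_mul_prod (h : IsGapFamily a b)
    (hg : ∀ N, 1 ≤ N → IsSqrtBranch (domDN a b N) (partialProd a b N) (g N)) (hM : 1 ≤ M) (n : ℕ) :
    Set.EqOn
      (fun z => g M z * ∏ i ∈ Finset.range n, sqrtRatio (a (M + i + 1)) (b (M + i + 1)) z)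
      (g (M + n)) (domDN a b M) :=
  IsSqrtBranch.eqOn (isPreconnected_domDN a b M) (domDN_mem_cobounded a b M)
    (fun _ hz => h.partialProd_ne_zero (M + n) hz) (h.isSqrtBranch_mul_prod (hg M hM) n)
    ((hg (M + n) (by lia)).mono (domDN_mono a b (Nat.le_add_right M n)))

theorem tendstoLocallyUniformlyOn_domDN (h : IsGapFamily a b)
    (hg : ∀ N, 1 ≤ N → IsSqrtBranch (domDN a b N) (partialProd a b N) (g N)) (hM : 1 ≤ M) :
    TendstoLocallyUniformlyOn g (fun z => g M z * tailProd a b M z) atTop (domDN a b M) := by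
  have hprod := (h.hasProdLocallyUniformlyOn_tailProd M).tendstoLocallyUniformlyOn_finsetRange
  have hconst : TendstoLocallyUniformlyOn (fun _ : ℕ => g M) (g M) atTop (domDN a b M) :=
    tendstoLocallyUniformlyOn_const atTop
  have hcont : ContinuousOn (tailProd a b M) (domDN a b M) :=
    hprod.continuousOn <| Frequently.of_forall fun _ => continuousOn_finsetProd _ fun _ _ =>
      (isSqrtBranch_sqrtRatio
        (h.disjoint_domDN_segment (by lia))).differentiableOn.continuousOn
  have hshift : TendstoLocallyUniformlyOn (fun n => g (M + n))
      (fun z => g M z * tailProd a b M z) atTop (domDN a b M) :=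
    (hconst.fun_mul₀ hprod (hg M hM).differentiableOn.continuousOn hcont).congr
      (h.eqOn_mul_prod hg hM)
  exact tendstoLocallyUniformlyOn_of_add_left hshift

theorem exists_tendstoLocallyUniformlyOn_compl_cantorAB (h : IsGapFamily a b)
    (hg : ∀ N, 1 ≤ N → IsSqrtBranch (domDN a b N) (partialProd a b N) (g N)) :
    ∃ G : ℂ → ℂ, TendstoLocallyUniformlyOn g G atTop (cantorAB a b)ᶜ ∧
      Tendsto G (Bornology.cobounded ℂ) (𝓝 1) := by
  set G : ℂ → ℂ := fun z => limUnder atTop fun N => g N z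
  have hG : ∀ M, 1 ≤ M → Set.EqOn (fun z => g M z * tailProd a b M z) G (domDN a b M) :=
    fun M hM z hz => ((h.tendstoLocallyUniformlyOn_domDN hg hM).tendsto_at hz).limUnder_eq.symm
  refine ⟨G, ?_, ?_⟩
  · rw [← iUnion_domDN]
    refine tendstoLocallyUniformlyOn_iUnion (isOpen_domDN a b) fun N => ?_
    exact ((h.tendstoLocallyUniformlyOn_domDN hg (by lia)).congr_right
      (hG (N + 1) (by lia))).mono (domDN_mono a b N.le_succ)
  · have hlim := (hg 1 le_rfl).tendsto.mul (h.tendsto_tailProd 1)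
    rw [mul_one] at hlim
    exact hlim.congr' ((hG 1 le_rfl).eventuallyEq_of_mem (domDN_mem_cobounded a b 1))

end IsGapFamily

/-- there is a holomorphic g₊ on D = ℂ ∖ 𝒞(a,b) with g₊² = f_{a,b},
g₊ → 1 at ∞, and the branches g^N₊ converge to g₊ uniformly on compact subsets of D. -/
theorem stmt8 (a b : ℕ → ℝ)
    (hab : ∀ j, a j < b j)
    (hsub : ∀ i, 1 ≤ i → Set.Icc (a i) (b i) ⊆ Set.Ioo (a 0) (b 0))
    (hdisj : ∀ i k, 1 ≤ i → 1 ≤ k → i ≠ k →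
      Disjoint (Set.Icc (a i) (b i)) (Set.Icc (a k) (b k)))
    (f : ℂ → ℂ)
    (hf : ∀ z ∉ cantorAB a b,
      Tendsto (fun N => partialProd a b N z) atTop (𝓝 (f z)))
    (hfdiff : DifferentiableOn ℂ f (cantorAB a b)ᶜ)
    (gN : ℕ → ℂ → ℂ)
    (hgN : ∀ N, 1 ≤ N →
      DifferentiableOn ℂ (gN N) (domDN a b N) ∧
      (∀ z ∈ domDN a b N, gN N z ^ 2 = partialProd a b N z) ∧
      Tendsto (gN N) (Bornology.cobounded ℂ) (𝓝 1)) :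
    ∃ g : ℂ → ℂ,
      DifferentiableOn ℂ g (cantorAB a b)ᶜ ∧
      (∀ z ∉ cantorAB a b, g z ^ 2 = f z) ∧
      Tendsto g (Bornology.cobounded ℂ) (𝓝 1) ∧
      (∀ K : Set ℂ, IsCompact K → K ⊆ (cantorAB a b)ᶜ →
        TendstoUniformlyOn (fun N z => gN N z) g atTop K) := by
  have hgap : IsGapFamily a b :=
    { le := fun i => (hab i).le
      Icc_subset := fun i hi => (hsub i hi).trans Set.Ioo_subset_Icc_self
      disjoint := fun i k hi hk hik => (hdisj i k hi hk hik).mono_right Set.Ioo_subset_Icc_self }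
  have hbranch : ∀ N, 1 ≤ N → IsSqrtBranch (domDN a b N) (partialProd a b N) (gN N) :=
    fun N hN => ⟨(hgN N hN).1, (hgN N hN).2.1, (hgN N hN).2.2⟩
  obtain ⟨g, hlim, hg_inf⟩ := hgap.exists_tendstoLocallyUniformlyOn_compl_cantorAB hbranch
  have hg : IsSqrtBranch (cantorAB a b)ᶜ f g := by
    rw [← iUnion_domDN] at hlim ⊢
    exact .iUnion_of_tendstoLocallyUniformlyOn (isOpen_domDN a b) (domDN_mono a b)
      ((eventually_ge_atTop 1).mono hbranch) (by rwa [iUnion_domDN]) hlim hg_inf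
  exact ⟨g, hg.differentiableOn, hg.sq_eq, hg.tendsto, fun K hK hKD =>
    (tendstoLocallyUniformlyOn_iff_forall_isCompact (isOpen_compl_cantorAB a b)).1 hlim K hKD hK⟩
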